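/- arXiv:math/9603216 — 9 statements merged into one kernel-verified Lean document; each statement's English description precedes it below -/
import Mathlib

section
/- Let A : ℕ → ℝ → ℂ be a family of differentiable functions (indexed by n ≥ 1) satisfying: Ȧ_1(t) = −A_1(t) for all t ∈ ℝ with A_1(0) = 1, and for every n ≥ 2: Ȧ_{n−1}(t) + Ȧ_n(t) = (n−1)·A_{n−1}(t) − n·A_n(t) for all t ∈ ℝ, together with A_n(0) = 0. Then for every n ≥ 1 and every t ∈ ℝ, A_n(t) = Σ_{j=1}^n 2·(−1)^{j+1}·C(n+j−1, n−j)·((2j−1)!/((j−1)!·(j+1)!))·e^{−jt}. -/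
/-- The coefficient of `e^{-jt}` in the closed form. -/
noncomputable def kcoef (n j : ℕ) : ℂ :=
  2 * (-1 : ℂ) ^ (j + 1) * (Nat.choose (n + j - 1) (n - j)) *
        ((Nat.factorial (2 * j - 1) : ℂ) /
          ((Nat.factorial (j - 1) : ℂ) * (Nat.factorial (j + 1) : ℂ)))

theorem kcoef_step (n j : ℕ) (hj : 1 ≤ j) (hjn : j ≤ n) :
    ((n : ℂ) + 1 - j) * kcoef (n + 1) j = ((n : ℂ) + j) * kcoef n j := by
  obtain ⟨k, rfl⟩ := Nat.exists_eq_add_of_le' hj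
  obtain ⟨d, rfl⟩ := Nat.exists_eq_add_of_le hjn
  unfold kcoef
  have e1 : k + 1 + d + 1 + (k + 1) - 1 = (2 * k + 1 + d) + 1 := by omega
  have e2 : k + 1 + d + 1 - (k + 1) = d + 1 := by omega
  have e3 : k + 1 + d + (k + 1) - 1 = 2 * k + 1 + d := by omega
  have e4 : k + 1 + d - (k + 1) = d := by omega
  rw [e1, e2, e3, e4, Nat.add_sub_cancel k 1]
  have h := congrArg (Nat.cast : ℕ → ℂ) (Nat.add_one_mul_choose_eq (2 * k + 1 + d) d)
  push_cast at h ⊢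
  linear_combination (-(2 * (-1 : ℂ) ^ (k + 1 + 1) * ((Nat.factorial (2 * (k + 1) - 1) : ℂ) /
          ((Nat.factorial k : ℂ) * (Nat.factorial (k + 1 + 1) : ℂ))))) * h

theorem kcoef_ratio (n m : ℕ) (hm : 1 ≤ m) (hmn : m < n) :
    ((n : ℂ) ^ 2 - (m : ℂ) ^ 2) * kcoef n m = -((m : ℂ) ^ 2 + 2 * m) * kcoef n (m + 1) := by
  obtain ⟨k, rfl⟩ := Nat.exists_eq_add_of_le' hm
  obtain ⟨d, rfl⟩ := Nat.exists_eq_add_of_lt hmn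
  unfold kcoef
  have e1 : k + 1 + d + 1 + (k + 1) - 1 = (2 * k + 1) + (d + 1) := by omega
  have e2 : k + 1 + d + 1 - (k + 1) = d + 1 := by omega
  have e3 : k + 1 + d + 1 + (k + 1 + 1) - 1 = (2 * k + 3) + d := by omega
  have e4 : k + 1 + d + 1 - (k + 1 + 1) = d := by omega
  have e5 : 2 * (k + 1) - 1 = 2 * k + 1 := by omega
  have e6 : 2 * (k + 1 + 1) - 1 = 2 * k + 3 := by omega
  rw [e1, e2, e3, e4, e5, e6, Nat.add_sub_cancel, Nat.add_sub_cancel,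
    Nat.choose_symm_add.symm, Nat.choose_symm_add.symm, Nat.cast_add_choose, Nat.cast_add_choose]
  have e7 : 2 * k + 3 + d = (2 * k + 1 + (d + 1)) + 1 := by omega
  rw [e7, Nat.factorial_succ (2 * k + 1 + (d + 1)), Nat.factorial_succ d,
    Nat.factorial_succ (k + 1 + 1), Nat.factorial_succ k]
  have f1 := Nat.cast_ne_zero (R := ℂ).2 (Nat.factorial_ne_zero (2 * k + 1))
  have f2 := Nat.cast_ne_zero (R := ℂ).2 (Nat.factorial_ne_zero (2 * k + 3))
  have f3 := Nat.cast_ne_zero (R := ℂ).2 (Nat.factorial_ne_zero d)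
  have f4 := Nat.cast_ne_zero (R := ℂ).2 (Nat.factorial_ne_zero k)
  have f5 := Nat.cast_ne_zero (R := ℂ).2 (Nat.factorial_ne_zero (k + 1 + 1))
  have g1 : (d : ℂ) + 1 ≠ 0 := by exact_mod_cast Nat.succ_ne_zero d
  have g2 : (k : ℂ) + 1 ≠ 0 := by exact_mod_cast Nat.succ_ne_zero k
  have g3 : (k : ℂ) + 1 + 1 + 1 ≠ 0 := by exact_mod_cast Nat.succ_ne_zero (k + 2)
  push_cast
  generalize ((2 * k + 1).factorial : ℂ) = F1 at *
  generalize ((2 * k + 3).factorial : ℂ) = F2 at *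
  generalize (d.factorial : ℂ) = F3 at *
  generalize (k.factorial : ℂ) = F4 at *
  generalize ((k + 1 + 1).factorial : ℂ) = F5 at *
  generalize ((2 * k + 1 + (d + 1)).factorial : ℂ) = F6 at *
  rw [pow_succ (-1 : ℂ) (k + 1 + 1)]
  generalize (-1 : ℂ) ^ (k + 1 + 1) = s
  field_simp
  ring

theorem kcoef_partial (n m : ℕ) (hm : 1 ≤ m) (hmn : m ≤ n) :
    ((n : ℂ) ^ 2 - 1) * ∑ j ∈ Finset.Icc 1 m, kcoef n j
      = ((n : ℂ) ^ 2 - (m : ℂ) ^ 2) * kcoef n m := by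
  induction m, hm using Nat.le_induction with
  | base => simp
  | succ m hm ih =>
    rw [Finset.sum_Icc_succ_top (by omega), mul_add, ih (by omega),
      kcoef_ratio n m hm (by omega)]
    push_cast
    ring

theorem kcoef_sum (n : ℕ) (hn : 2 ≤ n) : ∑ j ∈ Finset.Icc 1 n, kcoef n j = 0 := by
  have h := kcoef_partial n n (by omega) le_rfl
  rw [sub_self, zero_mul] at h
  refine (mul_eq_zero.1 h).resolve_left ?_
  have : n ^ 2 ≠ 1 := by nlinarith
  refine sub_ne_zero.2 ?_
  exact_mod_cast this

theorem ode_zero (c : ℂ) (f : ℝ → ℂ) (hf : ∀ t, HasDerivAt f (-c * f t) t) (h0 : f 0 = 0)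
    (t : ℝ) : f t = 0 := by
  have hE : ∀ t : ℝ, HasDerivAt (fun t : ℝ => Complex.exp (c * t)) (Complex.exp (c * t) * c) t := by
    intro t
    have := ((Complex.ofRealCLM.hasDerivAt (x := t)).const_mul c).cexp
    simpa using this
  have hd : ∀ t : ℝ, HasDerivAt (fun t : ℝ => Complex.exp (c * t) * f t) 0 t := by
    intro t
    refine ((hE t).mul (hf t)).congr_deriv ?_
    ring
  have := is_const_of_deriv_eq_zero (fun t => (hd t).differentiableAt) (fun t => (hd t).deriv) t 0
  simp only [h0, mul_zero] at this
  exact (mul_eq_zero.1 this).resolve_left (Complex.exp_ne_zero _)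

/-- The closed form. -/
noncomputable def kform (n : ℕ) (t : ℝ) : ℂ :=
  ∑ j ∈ Finset.Icc 1 n, kcoef n j * Complex.exp (-(j : ℂ) * (t : ℂ))

theorem kform_hasDerivAt (n : ℕ) (t : ℝ) : HasDerivAt (kform n)
    (∑ j ∈ Finset.Icc 1 n, kcoef n j * (-(j : ℂ) * Complex.exp (-(j : ℂ) * (t : ℂ)))) t := by
  unfold kform
  refine HasDerivAt.fun_sum fun j _ => HasDerivAt.const_mul _ ?_
  have := ((Complex.ofRealCLM.hasDerivAt (x := t)).const_mul (-(j : ℂ))).cexp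
  simpa [mul_comm] using this

theorem kform_rec (n : ℕ) (t : ℝ) :
    deriv (kform n) t + deriv (kform (n + 1)) t
      = (n : ℂ) * kform n t - ((n : ℂ) + 1) * kform (n + 1) t := by
  rw [(kform_hasDerivAt n t).deriv, (kform_hasDerivAt (n + 1) t).deriv]
  unfold kform
  rw [Finset.sum_Icc_succ_top (by omega), Finset.sum_Icc_succ_top (by omega)]
  have key : ∑ j ∈ Finset.Icc 1 n, (((n : ℂ) + 1 - j) * kcoef (n + 1) j
      - ((n : ℂ) + j) * kcoef n j) * Complex.exp (-(j : ℂ) * (t : ℂ)) = 0 := by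
    refine Finset.sum_eq_zero fun j hj => ?_
    rw [Finset.mem_Icc] at hj
    rw [kcoef_step n j hj.1 hj.2]
    ring
  have key2 : ∑ j ∈ Finset.Icc 1 n, (((n : ℂ) + 1 - j) * kcoef (n + 1) j
      - ((n : ℂ) + j) * kcoef n j) * Complex.exp (-(j : ℂ) * (t : ℂ))
      = ∑ j ∈ Finset.Icc 1 n, kcoef n j * (-(j : ℂ) * Complex.exp (-(j : ℂ) * (t : ℂ)))
      + ∑ j ∈ Finset.Icc 1 n, kcoef (n + 1) j * (-(j : ℂ) * Complex.exp (-(j : ℂ) * (t : ℂ)))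
      - (n : ℂ) * ∑ j ∈ Finset.Icc 1 n, kcoef n j * Complex.exp (-(j : ℂ) * (t : ℂ))
      + ((n : ℂ) + 1) * ∑ j ∈ Finset.Icc 1 n,
        kcoef (n + 1) j * Complex.exp (-(j : ℂ) * (t : ℂ)) := by
    rw [Finset.mul_sum, Finset.mul_sum, ← Finset.sum_add_distrib, ← Finset.sum_sub_distrib,
      ← Finset.sum_add_distrib]
    refine Finset.sum_congr rfl fun j _ => ?_
    ring
  rw [key] at key2
  push_cast
  linear_combination -key2

open Finset in
/-- The coefficient functions of the Löwner chain of the Koebe function are uniquely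
determined by their differential-difference system, and have the closed form
`A_n(t) = ∑_{j=1}^n 2(-1)^{j+1} C(n+j-1, n-j) (2j-1)!/((j-1)!(j+1)!) e^{-jt}`. -/
theorem koebe_chain_coefficients_closed_form
    (A : ℕ → ℝ → ℂ)
    (hdiff : ∀ n : ℕ, 1 ≤ n → Differentiable ℝ (A n))
    (h1 : ∀ t : ℝ, deriv (A 1) t = -(A 1 t))
    (h10 : A 1 0 = 1)
    (hrec : ∀ n : ℕ, 2 ≤ n → ∀ t : ℝ,
      deriv (A (n - 1)) t + deriv (A n) t = ((n : ℂ) - 1) * A (n - 1) t - (n : ℂ) * A n t)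
    (h0 : ∀ n : ℕ, 2 ≤ n → A n 0 = 0) :
    ∀ n : ℕ, 1 ≤ n → ∀ t : ℝ,
      A n t = ∑ j ∈ Icc 1 n, 2 * (-1 : ℂ) ^ (j + 1) * (Nat.choose (n + j - 1) (n - j)) *
        ((Nat.factorial (2 * j - 1) : ℂ) /
          ((Nat.factorial (j - 1) : ℂ) * (Nat.factorial (j + 1) : ℂ))) *
        Complex.exp (-(j : ℂ) * (t : ℂ)) := by
  suffices H : ∀ n : ℕ, 1 ≤ n → A n = kform n by
    intro n hn t
    rw [H n hn]
    rfl
  have hA : ∀ n, 1 ≤ n → ∀ t, HasDerivAt (A n) (deriv (A n) t) t :=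
    fun n hn t => (hdiff n hn t).hasDerivAt
  have hK : ∀ n t, HasDerivAt (kform n) (deriv (kform n) t) t :=
    fun n t => (kform_hasDerivAt n t).differentiableAt.hasDerivAt
  intro n hn
  induction n, hn using Nat.le_induction with
  | base =>
    funext t
    have h := ode_zero 1 (fun t => A 1 t - kform 1 t) (fun t => by
      refine ((hA 1 le_rfl t).sub (kform_hasDerivAt 1 t)).congr_deriv ?_
      rw [h1]
      simp [kform]
      ring) (by simp [h10, kform, kcoef]) t
    exact sub_eq_zero.1 h
  | succ n hn ih =>
    funext t
    have h := ode_zero ((n : ℂ) + 1) (fun t => A (n + 1) t - kform (n + 1) t) (fun t => by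
      refine ((hA (n + 1) (by omega) t).sub (hK (n + 1) t)).congr_deriv ?_
      have e := hrec (n + 1) (by omega) t
      have e' := kform_rec n t
      rw [Nat.add_sub_cancel, ih] at e
      push_cast at e
      linear_combination e - e') (by
      have := kcoef_sum (n + 1) (by omega)
      simp [h0 (n + 1) (by omega), kform, this]) t
    exact sub_eq_zero.1 h
end

section
/- For every integer n ≥ 2, the alternating binomial sum Σ_{j=1}^n 2·(−1)^{j+1}·C(n+j−1, n−j)·((2j−1)!/((j−1)!·(j+1)!)) equals 0ic (equivalently, A_n(0) = 0 for n ≥ 2, reflecting that the Löwner chain of the Koebe function satisfies w(z,0) = z). -/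
/-- Closed factorial form of the summand, with `j = k + 1` and `n = k + 1 + d`. -/
lemma koebe_term (k d : ℕ) :
    2 * (-1 : ℚ) ^ (k + 1 + 1) * (Nat.choose (k + 1 + d + (k + 1) - 1) (k + 1 + d - (k + 1))) *
      ((Nat.factorial (2 * (k + 1) - 1) : ℚ) /
        ((Nat.factorial (k + 1 - 1) : ℚ) * (Nat.factorial (k + 1 + 1) : ℚ)))
    = 2 * (-1 : ℚ) ^ k * (Nat.factorial (2 * k + 1 + d) : ℚ) /
      ((Nat.factorial d : ℚ) * (Nat.factorial k : ℚ) * (Nat.factorial (k + 2) : ℚ)) := by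
  have e1 : k + 1 + d + (k + 1) - 1 = (2 * k + 1) + d := by omega
  have e2 : k + 1 + d - (k + 1) = d := by omega
  have e3 : 2 * (k + 1) - 1 = 2 * k + 1 := by omega
  have e4 : k + 1 - 1 = k := by omega
  rw [e1, e2, e3, e4]
  have h := Nat.add_choose_mul_factorial_mul_factorial (2 * k + 1) d
  have h' : ((2 * k + 1 + d).choose d : ℚ) * (2 * k + 1).factorial * d.factorial
      = (2 * k + 1 + d).factorial := by exact_mod_cast h
  rw [← h']
  have := Nat.factorial_ne_zero
  have a1 : (d.factorial : ℚ) ≠ 0 := by exact_mod_cast this d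
  have a2 : (k.factorial : ℚ) ≠ 0 := by exact_mod_cast this k
  have a3 : ((k + 2).factorial : ℚ) ≠ 0 := by exact_mod_cast this (k + 2)
  have e5 : (-1 : ℚ) ^ (k + 1 + 1) = (-1) ^ k := by ring
  rw [e5]
  field_simp

open Finset in
/-- Telescoped partial sums. -/
lemma koebe_partial (n m : ℕ) (hm : m + 1 ≤ n) :
    ((n : ℚ) ^ 2 - 1) * ∑ j ∈ Icc 1 (m + 1),
      2 * (-1 : ℚ) ^ (j + 1) * (Nat.choose (n + j - 1) (n - j)) *
      ((Nat.factorial (2 * j - 1) : ℚ) /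
        ((Nat.factorial (j - 1) : ℚ) * (Nat.factorial (j + 1) : ℚ)))
    = ((n : ℚ) ^ 2 - ((m : ℚ) + 1) ^ 2) *
      (2 * (-1 : ℚ) ^ (m + 1 + 1) * (Nat.choose (n + (m + 1) - 1) (n - (m + 1))) *
      ((Nat.factorial (2 * (m + 1) - 1) : ℚ) /
        ((Nat.factorial (m + 1 - 1) : ℚ) * (Nat.factorial (m + 1 + 1) : ℚ)))) := by
  induction m with
  | zero => simp
  | succ k ih =>
    rw [Finset.sum_Icc_succ_top (by omega), mul_add, ih (by omega)]
    obtain ⟨d, rfl⟩ := Nat.exists_eq_add_of_le hm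
    rw [koebe_term (k + 1) d]
    have e : k + 1 + 1 + d = k + 1 + (d + 1) := by omega
    rw [e, koebe_term k (d + 1)]
    have f1 : 2 * (k + 1) + 1 + d = (2 * k + 1 + (d + 1)) + 1 := by omega
    rw [f1, Nat.factorial_succ (2 * k + 1 + (d + 1)), Nat.factorial_succ d, Nat.factorial_succ k,
      show k + 1 + 2 = (k + 2) + 1 from rfl, Nat.factorial_succ (k + 2)]
    have := Nat.factorial_ne_zero
    have a1 : (d.factorial : ℚ) ≠ 0 := by exact_mod_cast this d
    have a2 : (k.factorial : ℚ) ≠ 0 := by exact_mod_cast this k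
    have a3 : ((k + 2).factorial : ℚ) ≠ 0 := by exact_mod_cast this (k + 2)
    have b1 : (d : ℚ) + 1 ≠ 0 := by positivity
    have b2 : (k : ℚ) + 1 ≠ 0 := by positivity
    have b3 : (k : ℚ) + 2 + 1 ≠ 0 := by positivity
    rw [pow_succ]
    push_cast
    generalize ((2 * k + 1 + (d + 1)).factorial : ℚ) = F
    generalize ((k + 2).factorial : ℚ) = K at *
    field_simp
    ring


open Finset in
/-- For every `n ≥ 2`,
`∑_{j=1}^n 2(-1)^{j+1} C(n+j-1, n-j) (2j-1)!/((j-1)!(j+1)!) = 0`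
(i.e. `A_n(0) = 0`, reflecting that the Löwner chain of the Koebe function satisfies
`w(z,0) = z`). -/
theorem koebe_chain_coefficients_vanish_at_zero (n : ℕ) (hn : 2 ≤ n) :
    ∑ j ∈ Icc 1 n, 2 * (-1 : ℚ) ^ (j + 1) * (Nat.choose (n + j - 1) (n - j)) *
      ((Nat.factorial (2 * j - 1) : ℚ) /
        ((Nat.factorial (j - 1) : ℚ) * (Nat.factorial (j + 1) : ℚ))) = 0 := by

  obtain ⟨m, rfl⟩ : ∃ m, n = m + 1 := ⟨n - 1, by omega⟩
  have h := koebe_partial (m + 1) m le_rfl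
  have hz : (((m + 1 : ℕ) : ℚ) ^ 2 - ((m : ℚ) + 1) ^ 2) = 0 := by push_cast; ring
  rw [hz, zero_mul] at h
  refine (mul_eq_zero.mp h).resolve_left ?_
  have hm : (1 : ℚ) ≤ m := by exact_mod_cast (by omega : 1 ≤ m)
  push_cast
  nlinarith
end

section
/- (Connection between the de Branges and Weinstein functions.) Let n ≥ 1 and let τ_1, …, τ_{n+1} be a de Branges system of index n. Then for every k with 1 ≤ k ≤ n and every t ∈ ℝ, τ̇_k(t) = −k·Λ_k^n(t), where Λ_k^n(t) := Σ_{j=k}^n (−1)^{k+j}·C(2j, j−k)·C(n+j+1, n−j)·e^{−jt}. In particular the de Branges functions are uniquely determined by the system, and the derivative of the k-th de Branges function is −k times the k-th Weinstein function. -/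
open Finset

/-- A de Branges system of index `n`: differentiable functions `τ k : ℝ → ℝ`
(`k = 1, …, n+1`) with `τ (n+1) ≡ 0`, `τ k 0 = n+1-k`, and
`τ_{k+1}(t) - τ_k(t) = τ̇_k(t)/k + τ̇_{k+1}(t)/(k+1)` for `k = 1, …, n`. -/
structure IsDeBrangesSystem (n : ℕ) (τ : ℕ → ℝ → ℝ) : Prop where
  differentiable : ∀ k : ℕ, 1 ≤ k → k ≤ n + 1 → Differentiable ℝ (τ k)
  top_eq_zero : ∀ t : ℝ, τ (n + 1) t = 0
  initial : ∀ k : ℕ, 1 ≤ k → k ≤ n + 1 → τ k 0 = (n : ℝ) + 1 - (k : ℝ)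
  system : ∀ k : ℕ, 1 ≤ k → k ≤ n → ∀ t : ℝ,
    τ (k + 1) t - τ k t = deriv (τ k) t / (k : ℝ) + deriv (τ (k + 1)) t / ((k : ℝ) + 1)

/-- The Weinstein functions in closed form:
`Λ_k^n(t) = ∑_{j=k}^n (-1)^{k+j} C(2j, j-k) C(n+j+1, n-j) e^{-jt}`. -/
noncomputable def weinstein (n k : ℕ) (t : ℝ) : ℝ :=
  ∑ j ∈ Icc k n, (-1 : ℝ) ^ (k + j) * (Nat.choose (2 * j) (j - k)) *
    (Nat.choose (n + j + 1) (n - j)) * Real.exp (-(j : ℝ) * t)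

lemma aux_R (k m : ℕ) : ∑ i ∈ range (m + 1),
    (-1 : ℤ) ^ i * (Nat.choose (2 * (k + i)) i) * (Nat.choose (2 * k + m + i) (m - i))
      = (-1) ^ m := by
  have h := Ring.add_choose_eq (R := ℤ) (r := -((2 * k + m + 1 : ℕ) : ℤ))
    (s := ((2 * k + m : ℕ) : ℤ)) m (Commute.all _ _)
  have e : -((2 * k + m + 1 : ℕ) : ℤ) + ((2 * k + m : ℕ) : ℤ) = -((1 : ℕ) : ℤ) := by
    push_cast; ring
  have e2 : ∀ a i : ℕ, Ring.choose (-((a + 1 : ℕ) : ℤ)) i = (-1) ^ i * (Nat.choose (a + i) i) := by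
    intro a i
    rw [Ring.choose_neg]
    have : ((a + 1 : ℕ) : ℤ) + (i : ℤ) - 1 = ((a + i : ℕ) : ℤ) := by push_cast; ring
    rw [this, Ring.choose_natCast]
    simp [Int.negOnePow, Units.smul_def]
  rw [e, e2 0 m, Finset.Nat.sum_antidiagonal_eq_sum_range_succ_mk] at h
  simp only [zero_add, Nat.choose_self, Nat.cast_one, mul_one] at h
  rw [h]
  refine Finset.sum_congr rfl fun i hi => ?_
  rw [e2, Ring.choose_natCast]
  obtain ⟨l, rfl⟩ := Nat.exists_eq_add_of_le (Nat.lt_succ_iff.mp (Finset.mem_range.mp hi))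
  have hm := Nat.choose_mul (n := 2 * k + (i + l) + i) (k := 2 * (k + i)) (s := i) (by omega)
  have h1 : Nat.choose (2 * k + (i + l) + i) (2 * (k + i)) = Nat.choose (2 * k + (i + l) + i) l :=
    Nat.choose_symm_of_eq_add (by omega)
  have h2 : Nat.choose (2 * k + (i + l)) (2 * (k + i) - i) = Nat.choose (2 * k + (i + l)) l :=
    Nat.choose_symm_of_eq_add (by omega)
  rw [h1, Nat.add_sub_cancel, h2] at hm
  rw [Nat.add_sub_cancel_left]
  have hz : ((2 * k + (i + l) + i).choose l : ℤ) * ((2 * (k + i)).choose i)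
    = ((2 * k + (i + l) + i).choose i) * ((2 * k + (i + l)).choose l) := by exact_mod_cast hm
  linear_combination (-1) ^ i * hz

lemma aux_S (k m : ℕ) : 2 * ∑ i ∈ range (m + 1),
    (-1 : ℤ) ^ i * (Nat.choose (2 * (k + i)) i) * (Nat.choose (2 * k + m + i + 1) (m - i))
      = 1 + (-1) ^ m := by
  induction m with
  | zero => simp
  | succ m ih =>
    have hR := aux_R k (m + 1)
    have key : ∑ i ∈ range (m + 1 + 1), (-1 : ℤ) ^ i * (Nat.choose (2 * (k + i)) i) *
        (Nat.choose (2 * k + (m + 1) + i + 1) (m + 1 - i)) =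
      ∑ i ∈ range (m + 1 + 1), (-1 : ℤ) ^ i * (Nat.choose (2 * (k + i)) i) *
        (Nat.choose (2 * k + (m + 1) + i) (m + 1 - i)) +
      ∑ i ∈ range (m + 1), (-1 : ℤ) ^ i * (Nat.choose (2 * (k + i)) i) *
        (Nat.choose (2 * k + m + i + 1) (m - i)) := by
      rw [Finset.sum_range_succ, Finset.sum_range_succ _ (m + 1), add_right_comm (Finset.sum _ _),
        ← Finset.sum_add_distrib]
      congr 1
      · refine Finset.sum_congr rfl fun i hi => ?_
        have hi' := Finset.mem_range.mp hi
        rw [show m + 1 - i = (m - i) + 1 by omega, Nat.choose_succ_succ,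
          show 2 * k + m + i + 1 = 2 * k + (m + 1) + i by omega]
        push_cast; ring
      · simp
    rw [key, mul_add, hR, ih, pow_succ]; ring

lemma weinstein_zero (k m : ℕ) : 2 * weinstein (k + m) k 0 = 1 + (-1) ^ m := by
  have h := aux_S k m
  have h' := congrArg (Int.cast : ℤ → ℝ) h
  push_cast at h'
  rw [← h']
  congr 1
  unfold weinstein
  rw [← Finset.Ico_add_one_right_eq_Icc, Finset.sum_Ico_eq_sum_range,
    show k + m + 1 - k = m + 1 by omega]
  refine Finset.sum_congr rfl fun i hi => ?_
  rw [show k + (k + i) = 2 * k + i by ring, pow_add, pow_mul,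
    show k + i - k = i by omega, show k + m - (k + i) = m - i by omega,
    show k + m + (k + i) + 1 = 2 * k + m + i + 1 by ring]
  simp

lemma weinstein_top (n : ℕ) (t : ℝ) : weinstein n (n + 1) t = 0 := by
  simp [weinstein]

lemma weinstein_zero_add (n k : ℕ) (h : k ≤ n) :
    weinstein n k 0 + weinstein n (k + 1) 0 = 1 := by
  obtain ⟨m, rfl⟩ := Nat.exists_eq_add_of_le h
  have h1 := weinstein_zero k m
  cases m with
  | zero =>
    have := weinstein_top k 0
    simp only [add_zero, pow_zero] at *
    linarith
  | succ m =>
    have h2 := weinstein_zero (k + 1) m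
    rw [show k + 1 + m = k + (m + 1) by ring] at h2
    rw [pow_succ] at h1
    linarith

/-- The closed form of the de Branges functions. -/
noncomputable def sig (n k : ℕ) (t : ℝ) : ℝ :=
  ∑ j ∈ Icc k n, (k / j : ℝ) * ((-1 : ℝ) ^ (k + j) * (Nat.choose (2 * j) (j - k)) *
    (Nat.choose (n + j + 1) (n - j)) * Real.exp (-(j : ℝ) * t))

lemma sig_hasDerivAt (n k : ℕ) (hk : 1 ≤ k) (t : ℝ) :
    HasDerivAt (sig n k) (-(k : ℝ) * weinstein n k t) t := by
  unfold sig weinstein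
  rw [Finset.mul_sum]
  refine HasDerivAt.fun_sum fun j hj => ?_
  have hj0 : (j : ℝ) ≠ 0 := by
    have := (Finset.mem_Icc.mp hj).1
    exact_mod_cast (by omega : j ≠ 0)
  have h1 : HasDerivAt (fun t : ℝ => Real.exp (-(j : ℝ) * t))
      (Real.exp (-(j : ℝ) * t) * (-(j : ℝ) * 1)) t :=
    ((hasDerivAt_id t).const_mul _).exp
  refine ((h1.const_mul _).const_mul _).congr_deriv ?_
  field_simp

lemma sig_rec (n k : ℕ) (hk : 1 ≤ k) (hkn : k ≤ n) (t : ℝ) :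
    sig n k t = sig n (k + 1) t + weinstein n k t + weinstein n (k + 1) t := by
  unfold sig weinstein
  rw [← Finset.insert_Icc_add_one_left_eq_Icc hkn, Finset.sum_insert (by simp),
    Finset.sum_insert (by simp)]
  have hk0 : (k : ℝ) ≠ 0 := by exact_mod_cast (by omega : k ≠ 0)
  rw [div_self hk0, one_mul]
  have key : ∀ j ∈ Icc (k + 1) n,
      (k / j : ℝ) * ((-1 : ℝ) ^ (k + j) * (Nat.choose (2 * j) (j - k)) *
        (Nat.choose (n + j + 1) (n - j)) * Real.exp (-(j : ℝ) * t)) =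
      (((k + 1 : ℕ) : ℝ) / j) * ((-1 : ℝ) ^ (k + 1 + j) * (Nat.choose (2 * j) (j - (k + 1))) *
        (Nat.choose (n + j + 1) (n - j)) * Real.exp (-(j : ℝ) * t)) +
      (-1 : ℝ) ^ (k + j) * (Nat.choose (2 * j) (j - k)) *
        (Nat.choose (n + j + 1) (n - j)) * Real.exp (-(j : ℝ) * t) +
      (-1 : ℝ) ^ (k + 1 + j) * (Nat.choose (2 * j) (j - (k + 1))) *
        (Nat.choose (n + j + 1) (n - j)) * Real.exp (-(j : ℝ) * t) := by
    intro j hj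
    obtain ⟨i, rfl⟩ := Nat.exists_eq_add_of_le (Finset.mem_Icc.mp hj).1
    have hc := Nat.choose_succ_right_eq (2 * (k + 1 + i)) i
    rw [show 2 * (k + 1 + i) - i = 2 * k + 2 + i by omega] at hc
    have hc' : ((Nat.choose (2 * (k + 1 + i)) (i + 1) : ℕ) : ℝ) * (i + 1) =
      (Nat.choose (2 * (k + 1 + i)) i : ℕ) * (2 * k + 2 + i) := by exact_mod_cast hc
    rw [show k + 1 + i - k = i + 1 by omega, show k + 1 + i - (k + 1) = i by omega]
    have hj0 : (k : ℝ) + 1 + i ≠ 0 := by positivity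
    rw [show k + 1 + (k + 1 + i) = (k + (k + 1 + i)) + 1 by ring, pow_succ]
    generalize Nat.choose (n + (k + 1 + i) + 1) (n - (k + 1 + i)) = C
    generalize Real.exp _ = E
    generalize (-1 : ℝ) ^ _ = s
    generalize Nat.choose (2 * (k + 1 + i)) (i + 1) = A at *
    generalize Nat.choose (2 * (k + 1 + i)) i = B at *
    push_cast
    field_simp
    linear_combination -(s * C * E) * hc'
  rw [Finset.sum_congr rfl key, Finset.sum_add_distrib, Finset.sum_add_distrib]
  ring

/-- Connection between de Branges and Weinstein functions: for any de Branges system of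
index `n` and `1 ≤ k ≤ n`, one has `τ̇_k(t) = -k·Λ_k^n(t)`. -/
theorem deBranges_deriv_eq_neg_mul_weinstein
    (n : ℕ) (hn : 1 ≤ n) (τ : ℕ → ℝ → ℝ) (hτ : IsDeBrangesSystem n τ) :
    ∀ k : ℕ, 1 ≤ k → k ≤ n → ∀ t : ℝ,
      deriv (τ k) t = -(k : ℝ) * weinstein n k t := by
  have hinit : ∀ k : ℕ, k ≤ n + 1 → 1 ≤ k → sig n k 0 = (n : ℝ) + 1 - k := by
    intro k hk
    induction hk using Nat.decreasingInduction with
    | self => intro _; simp [sig]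
    | of_succ k hk ih =>
      intro h1
      rw [sig_rec n k h1 (by omega), ih (by omega), add_assoc, weinstein_zero_add n k (by omega)]
      push_cast; ring
  have main : ∀ k : ℕ, k ≤ n + 1 → 1 ≤ k → τ k = sig n k := by
    intro k hk
    induction hk using Nat.decreasingInduction with
    | self => intro _; funext t; simp [sig, hτ.top_eq_zero]
    | of_succ k hk ih =>
      intro h1
      have ih := ih (by omega)
      have hk0 : (k : ℝ) ≠ 0 := by exact_mod_cast (by omega : k ≠ 0)
      have hd : ∀ t, HasDerivAt (fun t => (τ k t - sig n k t) * Real.exp (k * t)) 0 t := by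
        intro t
        have a1 := (hτ.differentiable k h1 (by omega) t).hasDerivAt
        have a2 := sig_hasDerivAt n k h1 t
        have a3 : HasDerivAt (fun t : ℝ => Real.exp ((k : ℝ) * t))
            (Real.exp ((k : ℝ) * t) * ((k : ℝ) * 1)) t :=
          ((hasDerivAt_id t).const_mul _).exp
        have s := hτ.system k h1 (by omega) t
        rw [ih, (sig_hasDerivAt n (k + 1) (by omega) t).deriv] at s
        have r := sig_rec n k h1 (by omega) t
        refine ((a1.sub a2).mul a3).congr_deriv ?_
        have hk1 : (k : ℝ) + 1 ≠ 0 := by positivity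
        push_cast at s
        rw [neg_mul, neg_div, mul_div_cancel_left₀ _ hk1] at s
        have e : deriv (τ k) t = k * (sig n (k + 1) t - τ k t + weinstein n (k + 1) t) := by
          rw [s]; field_simp; ring
        simp only [Pi.sub_apply]
        rw [e, r]; ring
      funext t
      have c := is_const_of_deriv_eq_zero (fun t => (hd t).differentiableAt)
        (fun t => (hd t).deriv) t 0
      simp only [hτ.initial k h1 (by omega), hinit k (by omega) h1, sub_self, zero_mul] at c
      rcases mul_eq_zero.mp c with c | c
      · linarith
      · exact absurd c (Real.exp_ne_zero _)
  intro k h1 hk t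
  rw [main k (by omega) h1]
  exact (sig_hasDerivAt n k h1 t).deriv
end

section
/- For integers 1 ≤ k ≤ n define Λ_k^n(t) := Σ_{j=k}^n (−1)^{k+j}·C(2j, j−k)·C(n+j+1, n−j)·e^{−jt}. Then for every n ≥ 2, every k with 1 ≤ k ≤ n−1, and every t ∈ ℝ, the differential relation Λ̇_k^n(t) + Λ̇_{k+1}^n(t) = (k+1)·Λ_{k+1}^n(t) − k·Λ_k^n(t) holds. -/
open Finset

theorem weinstein_hasDerivAt (n k : ℕ) (t : ℝ) :
    HasDerivAt (weinstein n k) (∑ j ∈ Icc k n, (-1 : ℝ) ^ (k + j) * (Nat.choose (2 * j) (j - k)) *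
    (Nat.choose (n + j + 1) (n - j)) * (Real.exp (-(j : ℝ) * t) * (-(j : ℝ)))) t := by
  unfold weinstein
  refine HasDerivAt.fun_sum fun j _ => ?_
  refine HasDerivAt.const_mul _ ?_
  have h : HasDerivAt (fun t : ℝ => -(j : ℝ) * t) (-(j : ℝ)) t := by
    simpa using (hasDerivAt_id t).const_mul (-(j : ℝ))
  exact h.exp

/-- The Weinstein functions satisfy the differential equations system
`Λ̇_k^n + Λ̇_{k+1}^n = (k+1)Λ_{k+1}^n - k·Λ_k^n` for `1 ≤ k ≤ n-1`. -/
theorem weinstein_system (n : ℕ) (hn : 2 ≤ n) (k : ℕ) (hk1 : 1 ≤ k) (hk2 : k ≤ n - 1)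
    (t : ℝ) :
    deriv (weinstein n k) t + deriv (weinstein n (k + 1)) t =
      ((k : ℝ) + 1) * weinstein n (k + 1) t - (k : ℝ) * weinstein n k t := by
  rw [(weinstein_hasDerivAt n k t).deriv, (weinstein_hasDerivAt n (k + 1) t).deriv]
  unfold weinstein
  have hkn : k ≤ n := by omega
  have hI : Icc k n = insert k (Icc (k + 1) n) := by
    ext j; simp only [mem_insert, mem_Icc]; omega
  have hnot : k ∉ Icc (k + 1) n := by simp
  rw [hI, sum_insert hnot, sum_insert hnot, mul_add, mul_sum, mul_sum]
  have key : ∑ j ∈ Icc (k + 1) n, (-1 : ℝ) ^ (k + j) * (Nat.choose (2 * j) (j - k)) *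
        (Nat.choose (n + j + 1) (n - j)) * (Real.exp (-(j : ℝ) * t) * (-(j : ℝ)))
      + ∑ j ∈ Icc (k + 1) n, (-1 : ℝ) ^ (k + 1 + j) * (Nat.choose (2 * j) (j - (k + 1))) *
        (Nat.choose (n + j + 1) (n - j)) * (Real.exp (-(j : ℝ) * t) * (-(j : ℝ)))
      = ∑ j ∈ Icc (k + 1) n, ((k : ℝ) + 1) * ((-1 : ℝ) ^ (k + 1 + j) *
          (Nat.choose (2 * j) (j - (k + 1))) *
          (Nat.choose (n + j + 1) (n - j)) * Real.exp (-(j : ℝ) * t))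
        - ∑ j ∈ Icc (k + 1) n, (k : ℝ) * ((-1 : ℝ) ^ (k + j) * (Nat.choose (2 * j) (j - k)) *
          (Nat.choose (n + j + 1) (n - j)) * Real.exp (-(j : ℝ) * t)) := by
    rw [← sum_add_distrib, ← sum_sub_distrib]
    refine sum_congr rfl fun j hj => ?_
    obtain ⟨m, rfl⟩ := Nat.exists_eq_add_of_le (mem_Icc.mp hj).1
    have h1 : k + 1 + m - k = m + 1 := by omega
    have h2 : k + 1 + m - (k + 1) = m := by omega
    rw [h1, h2]
    have hc := Nat.choose_succ_right_eq (2 * (k + 1 + m)) m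
    have h3 : 2 * (k + 1 + m) - m = 2 * k + 2 + m := by omega
    rw [h3] at hc
    have hr : ((Nat.choose (2 * (k + 1 + m)) (m + 1) : ℕ) : ℝ) * ((m : ℝ) + 1)
        = (Nat.choose (2 * (k + 1 + m)) m : ℕ) * (2 * (k : ℝ) + 2 + m) := by
      exact_mod_cast hc
    have hp : (-1 : ℝ) ^ (k + 1 + (k + 1 + m)) = -(-1 : ℝ) ^ (k + (k + 1 + m)) := by
      rw [show k + 1 + (k + 1 + m) = (k + (k + 1 + m)) + 1 by omega, pow_succ]; ring
    rw [hp]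
    generalize (-1 : ℝ) ^ (k + (k + 1 + m)) = s
    generalize Real.exp _ = E
    generalize ((Nat.choose (n + (k + 1 + m) + 1) (n - (k + 1 + m)) : ℕ) : ℝ) = D
    push_cast
    linear_combination (-s * D * E) * hr
  linear_combination key
end

section
/- For all integers 1 ≤ k ≤ n, the alternating binomial sum Σ_{j=k}^n (−1)^{k+j}·C(2j, j−k)·C(n+j+1, n−j) equals 1 if n − k is even and equals 0 if n − k is odd. (This expresses the initial values Λ_k^n(0) of the Weinstein functions, coming from W_k(z,0) = z^k/(1−z²) = Σ_{j≥0} z^{2j+k}.) -/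
namespace WeinsteinAux

open Finset Polynomial

/-- Even Morgan-Voyce type sum. -/
noncomputable def sA (a b : ℤ[X]) (n : ℕ) : ℤ[X] :=
  ∑ j ∈ range (n + 1), ((n + j).choose (2 * j) : ℤ[X]) * a ^ j * b ^ (n - j)

/-- Odd Morgan-Voyce type sum. -/
noncomputable def sB (a b : ℤ[X]) (n : ℕ) : ℤ[X] :=
  ∑ j ∈ range (n + 1), ((n + j + 1).choose (2 * j + 1) : ℤ[X]) * a ^ j * b ^ (n - j)

lemma sB_succ (a b : ℤ[X]) (n : ℕ) : sB a b (n + 1) = b * sB a b n + sA a b (n + 1) := by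
  have h : b * sB a b n = ∑ j ∈ range (n + 2),
      ((n + j + 1).choose (2 * j + 1) : ℤ[X]) * a ^ j * b ^ (n + 1 - j) := by
    rw [sum_range_succ, Nat.choose_eq_zero_of_lt (by omega : n + (n + 1) + 1 < 2 * (n + 1) + 1),
      sB, mul_sum]
    simp only [Nat.cast_zero, zero_mul, add_zero]
    refine sum_congr rfl fun j hj => ?_
    have hj' := mem_range.1 hj
    rw [show n + 1 - j = (n - j) + 1 by omega]
    ring
  rw [h, sA, sB, ← sum_add_distrib]
  refine sum_congr rfl fun j _ => ?_
  rw [show n + 1 + j + 1 = (n + j + 1) + 1 by ring, Nat.choose_succ_succ,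
    show n + 1 + j = n + j + 1 by ring]
  push_cast
  ring

lemma sA_succ (a b : ℤ[X]) (n : ℕ) : sA a b (n + 1) = b * sA a b n + a * sB a b n := by
  have h : b * sA a b n = ∑ j ∈ range (n + 2),
      ((n + j).choose (2 * j) : ℤ[X]) * a ^ j * b ^ (n + 1 - j) := by
    rw [sum_range_succ, Nat.choose_eq_zero_of_lt (by omega : n + (n + 1) < 2 * (n + 1)),
      sA, mul_sum]
    simp only [Nat.cast_zero, zero_mul, add_zero]
    refine sum_congr rfl fun j hj => ?_
    have hj' := mem_range.1 hj
    rw [show n + 1 - j = (n - j) + 1 by omega]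
    ring
  rw [h, sA, sB, sum_range_succ' _ (n + 1), sum_range_succ' _ (n + 1), mul_sum,
    add_right_comm (∑ k ∈ range (n + 1), _) _ (∑ k ∈ range (n + 1), _), ← sum_add_distrib]
  congr 1
  · refine sum_congr rfl fun j _ => ?_
    rw [show n + 1 + (j + 1) = (n + j + 1) + 1 by ring, show 2 * (j + 1) = (2 * j + 1) + 1 by ring,
      Nat.choose_succ_succ, show n + (j + 1) = n + j + 1 by ring,
      show n + 1 - (j + 1) = n - j by omega]
    push_cast
    ring
  · simp

lemma closed (n : ℕ) :
    sA (-(1 + X) ^ 2) X n * (1 - X) = (-1) ^ n * (1 - X ^ (2 * n + 1)) ∧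
    sB (-(1 + X) ^ 2) X n * (1 - X ^ 2) = (-1) ^ n * (1 - X ^ (2 * n + 2)) := by
  induction n with
  | zero => simp [sA, sB]
  | succ n ih =>
    obtain ⟨h1, h2⟩ := ih
    have hX : (1 + X : ℤ[X]) ≠ 0 := by
      intro h
      have := congrArg (Polynomial.eval 1) h
      norm_num at this
    have h3 : sA (-(1 + X) ^ 2) X (n + 1) * (1 - X) = (-1) ^ (n + 1) * (1 - X ^ (2 * (n + 1) + 1)) := by
      rw [sA_succ]
      linear_combination X * h1 - (1 + X) * h2
    refine ⟨h3, ?_⟩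
    rw [sB_succ]
    linear_combination X * h2 + (1 + X) * h3

lemma closedB (n : ℕ) :
    sB (-(1 + X) ^ 2) X n = (-1) ^ n * ∑ i ∈ range (n + 1), X ^ (2 * i) := by
  have hX : (1 - X ^ 2 : ℤ[X]) ≠ 0 := by
    intro h
    have := congrArg (Polynomial.eval 2) h
    norm_num at this
  apply mul_right_cancel₀ hX
  have h := geom_sum_mul_neg (X ^ 2 : ℤ[X]) (n + 1)
  simp only [← pow_mul] at h
  rw [(closed n).2, mul_assoc, h]
  ring_nf

end WeinsteinAux

open Finset in
/-- For `1 ≤ k ≤ n`, `∑_{j=k}^n (-1)^{k+j} C(2j, j-k) C(n+j+1, n-j)` equals `1` if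
`n - k` is even and `0` if `n - k` is odd (the initial values `Λ_k^n(0)` of the
Weinstein functions, coming from `W_k(z,0) = z^k/(1-z²) = ∑_{j≥0} z^{2j+k}`). -/
theorem weinstein_initial_values (n k : ℕ) (hk1 : 1 ≤ k) (hk2 : k ≤ n) :
    ∑ j ∈ Icc k n, (-1 : ℤ) ^ (k + j) * (Nat.choose (2 * j) (j - k)) *
      (Nat.choose (n + j + 1) (n - j)) = if Even (n - k) then 1 else 0 := by
  have h := congrArg (fun p => (-1 : ℤ) ^ k * Polynomial.coeff p (n - k)) (WeinsteinAux.closedB n)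
  have hl : (-1 : ℤ) ^ k * (WeinsteinAux.sB (-(1 + Polynomial.X) ^ 2) Polynomial.X n).coeff (n - k)
      = ∑ j ∈ Icc k n, (-1 : ℤ) ^ (k + j) * (Nat.choose (2 * j) (j - k)) *
      (Nat.choose (n + j + 1) (n - j)) := by
    rw [WeinsteinAux.sB, Polynomial.finsetSum_coeff, mul_sum]
    symm
    have hsub : Icc k n ⊆ range (n + 1) := by
      intro j hj
      rw [mem_Icc] at hj
      rw [mem_range]
      omega
    have key : ∀ j, (((n + j + 1).choose (2 * j + 1) : Polynomial ℤ) *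
        (-(1 + Polynomial.X) ^ 2) ^ j * Polynomial.X ^ (n - j)).coeff (n - k) =
        if n - j ≤ n - k then ((n + j + 1).choose (2 * j + 1) : ℤ) *
          ((-1) ^ j * ((2 * j).choose (n - k - (n - j)) : ℤ)) else 0 := by
      intro j
      rw [Polynomial.coeff_mul_X_pow']
      congr 1
      rw [neg_pow, ← pow_mul, Polynomial.coeff_natCast_mul,
        show (-1 : Polynomial ℤ) ^ j = Polynomial.C ((-1) ^ j) by simp,
        Polynomial.coeff_C_mul, Polynomial.coeff_one_add_X_pow]
    rw [← sum_subset hsub]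
    · refine sum_congr rfl fun j hj => ?_
      rw [mem_Icc] at hj
      rw [key, if_pos (by omega), show n - k - (n - j) = j - k by omega,
        Nat.choose_symm_of_eq_add (show n + j + 1 = (n - j) + (2 * j + 1) by omega)]
      ring
    · intro j hj hj'
      rw [mem_range] at hj
      rw [mem_Icc] at hj'
      rw [key, if_neg (by omega), mul_zero]
  rw [← hl, h, show (-1 : Polynomial ℤ) ^ n = Polynomial.C ((-1) ^ n) by simp,
    Polynomial.coeff_C_mul, Polynomial.finsetSum_coeff]
  simp only [Polynomial.coeff_X_pow]
  split_ifs with he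
  · obtain ⟨m, hm⟩ := he
    rw [sum_eq_single m]
    · rw [if_pos (by omega), mul_one, ← pow_add]
      exact Even.neg_one_pow ⟨m + k, by omega⟩
    · intro i _ hi
      exact if_neg (by omega)
    · intro hmn
      rw [mem_range] at hmn
      omega
  · rw [sum_eq_zero]
    · simp
    · intro i _
      refine if_neg fun hi => he ⟨i, by omega⟩
end

section
/- (Gosper-summable identity.) For all integers 1 ≤ j ≤ n, Σ_{l=j}^n (n+1−l)·C(l+j−1, l−j) = ((j+n)·(n+1+j))/(2j·(2j+1)) · C(n+j−1, n−j). Equivalently, 2j·(2j+1)·Σ_{l=j}^n (n+1−l)·C(l+j−1, l−j) = (j+n)·(n+1+j)·C(n+j−1, n−j). -/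
theorem gs_aux1 (a m : ℕ) :
    ∑ k ∈ Finset.range (m + 1), (Nat.choose (a + k) k : ℚ) = Nat.choose (a + 1 + m) m := by
  induction m with
  | zero => simp
  | succ m ih =>
    rw [Finset.sum_range_succ, ih, show a + 1 + (m + 1) = (a + 1 + m) + 1 by ring,
      Nat.choose_succ_succ, show a + (m + 1) = a + 1 + m by ring]
    push_cast
    ring

theorem gs_aux2 (a m : ℕ) :
    ∑ k ∈ Finset.range (m + 1), ((m : ℚ) + 1 - k) * (Nat.choose (a + k) k : ℚ)
      = Nat.choose (a + 2 + m) m := by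
  induction m with
  | zero => simp
  | succ m ih =>
    have h1 := gs_aux1 a (m + 1)
    have h2 : ∑ k ∈ Finset.range (m + 1 + 1), (((m + 1 : ℕ) : ℚ) + 1 - k) * (Nat.choose (a + k) k : ℚ)
      = ∑ k ∈ Finset.range (m + 1 + 1), ((m : ℚ) + 1 - k) * (Nat.choose (a + k) k : ℚ)
        + ∑ k ∈ Finset.range (m + 1 + 1), (Nat.choose (a + k) k : ℚ) := by
      rw [← Finset.sum_add_distrib]
      apply Finset.sum_congr rfl
      intro k _
      push_cast
      ring
    rw [h2, h1, Finset.sum_range_succ, ih, show a + 2 + (m + 1) = (a + 2 + m) + 1 by ring,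
      Nat.choose_succ_succ, show a + 1 + (m + 1) = a + 2 + m by ring]
    push_cast
    ring

theorem gs_aux3 (b m : ℕ) :
    (b + 1) * Nat.choose (b + 1 + m) m = (b + 1 + m) * Nat.choose (b + m) m := by
  have h := Nat.add_one_mul_choose_eq (b + m) b
  rw [Nat.choose_symm_add (a := b) (b := m),
    show b + m + 1 = (b + 1) + m by ring, Nat.choose_symm_add (a := b + 1) (b := m)] at h
  linarith

open Finset in
/-- Gosper-summable identity: for `1 ≤ j ≤ n`,
`∑_{l=j}^n (n+1-l) C(l+j-1, l-j) = ((j+n)(n+1+j))/(2j(2j+1)) · C(n+j-1, n-j)`;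
equivalently `2j(2j+1)·∑_{l=j}^n (n+1-l) C(l+j-1, l-j) = (j+n)(n+1+j)·C(n+j-1, n-j)`. -/
theorem gosper_summable_identity (j n : ℕ) (hj : 1 ≤ j) (hjn : j ≤ n) :
    (∑ l ∈ Icc j n, ((n : ℚ) + 1 - (l : ℚ)) * (Nat.choose (l + j - 1) (l - j)) =
      (((j : ℚ) + n) * ((n : ℚ) + 1 + j)) / ((2 * (j : ℚ)) * (2 * (j : ℚ) + 1)) *
        (Nat.choose (n + j - 1) (n - j))) ∧
    (2 * j * (2 * j + 1) * ∑ l ∈ Icc j n, (n + 1 - l) * Nat.choose (l + j - 1) (l - j) =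
      (j + n) * (n + 1 + j) * Nat.choose (n + j - 1) (n - j)) := by
  have key : (2 * (j : ℚ) * (2 * j + 1)) *
      ∑ l ∈ Icc j n, ((n : ℚ) + 1 - (l : ℚ)) * (Nat.choose (l + j - 1) (l - j)) =
      ((j : ℚ) + n) * (n + 1 + j) * (Nat.choose (n + j - 1) (n - j)) := by
    obtain ⟨m, rfl⟩ := Nat.exists_eq_add_of_le hjn
    obtain ⟨i, rfl⟩ := Nat.exists_eq_add_of_le' hj
    have hs : ∑ l ∈ Icc (i + 1) (i + 1 + m), (((i + 1 + m : ℕ) : ℚ) + 1 - (l : ℚ)) *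
        (Nat.choose (l + (i + 1) - 1) (l - (i + 1)))
        = ∑ k ∈ range (m + 1), ((m : ℚ) + 1 - k) * (Nat.choose (2 * i + 1 + k) k : ℚ) := by
      rw [← Finset.Ico_add_one_right_eq_Icc, Finset.sum_Ico_eq_sum_range,
        show i + 1 + m + 1 - (i + 1) = m + 1 by omega]
      apply Finset.sum_congr rfl
      intro k _
      rw [show i + 1 + k + (i + 1) - 1 = 2 * i + 1 + k by omega,
        show i + 1 + k - (i + 1) = k by omega]
      push_cast
      ring
    rw [hs, gs_aux2, show i + 1 + m + (i + 1) - 1 = 2 * i + 1 + m by omega,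
        show i + 1 + m - (i + 1) = m by omega]
    have e1 := gs_aux3 (2 * i + 1) m
    have e2 := gs_aux3 (2 * i + 2) m
    rw [show 2 * i + 1 + 1 = 2 * i + 2 by ring] at e1
    rw [show 2 * i + 2 + 1 = 2 * i + 1 + 2 by ring] at e2
    have e1' : ((2 * i + 2 : ℚ)) * (Nat.choose (2 * i + 2 + m) m : ℚ)
      = (2 * i + 2 + m) * (Nat.choose (2 * i + 1 + m) m : ℚ) := by exact_mod_cast e1
    have e2' : ((2 * i + 1 + 2 : ℚ)) * (Nat.choose (2 * i + 1 + 2 + m) m : ℚ)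
      = (2 * i + 1 + 2 + m) * (Nat.choose (2 * i + 2 + m) m : ℚ) := by exact_mod_cast e2
    push_cast
    linear_combination (2 * i + 2 : ℚ) * e2' + (2 * i + 1 + 2 + m : ℚ) * e1'
  have hj0 : (0 : ℚ) < j := by exact_mod_cast hj
  constructor
  · rw [div_mul_eq_mul_div, eq_div_iff (by positivity), ← key]
    ring
  · have hc : ((∑ l ∈ Icc j n, (n + 1 - l) * Nat.choose (l + j - 1) (l - j) : ℕ) : ℚ)
        = ∑ l ∈ Icc j n, ((n : ℚ) + 1 - (l : ℚ)) * (Nat.choose (l + j - 1) (l - j)) := by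
      rw [Nat.cast_sum]
      apply Finset.sum_congr rfl
      intro l hl
      have := (Finset.mem_Icc.mp hl).2
      rw [Nat.cast_mul, Nat.cast_sub (by omega)]
      push_cast
      ring
    rw [← hc] at key
    exact_mod_cast key
end

section
/- For all integers 1 ≤ j ≤ n, the identity C(2j, j−1)·C(n+j+1, n−j) = 2j·((2j−1)!/((j−1)!·(j+1)!))·Σ_{l=j}^n (n+1−l)·C(l+j−1, l−j) holds. (This identifies the coefficient a_j^{(n,1)} of e^{−jt} in the first Weinstein function Λ_1^n(t) = −Σ_{l=1}^n (n+1−l)·Ȧ_l(t).) -/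
theorem aux_sum_one (a m : ℕ) :
    ∑ i ∈ Finset.range (m + 1), (Nat.choose (a + i) i : ℚ) = Nat.choose (a + 1 + m) m := by
  induction m with
  | zero => simp
  | succ m ih =>
    rw [Finset.sum_range_succ, ih, show a + 1 + (m + 1) = (a + 1 + m) + 1 by ring,
      Nat.choose_succ_succ, show a + (m + 1) = a + 1 + m by ring]
    push_cast
    ring

theorem aux_sum_two (a m : ℕ) :
    ∑ i ∈ Finset.range (m + 1), ((m : ℚ) + 1 - i) * (Nat.choose (a + i) i : ℚ)
      = Nat.choose (a + 2 + m) m := by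
  induction m with
  | zero => simp
  | succ m ih =>
    have h1 := aux_sum_one a (m + 1)
    have h2 : ∑ i ∈ Finset.range (m + 1 + 1),
        (((m + 1 : ℕ) : ℚ) + 1 - i) * (Nat.choose (a + i) i : ℚ)
        = ∑ i ∈ Finset.range (m + 1 + 1), ((m : ℚ) + 1 - i) * (Nat.choose (a + i) i : ℚ)
          + ∑ i ∈ Finset.range (m + 1 + 1), (Nat.choose (a + i) i : ℚ) := by
      rw [← Finset.sum_add_distrib]
      refine Finset.sum_congr rfl fun i _ => ?_
      push_cast
      ring
    rw [h2, h1, Finset.sum_range_succ, ih, show a + 2 + (m + 1) = (a + 2 + m) + 1 by ring,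
      Nat.choose_succ_succ, show a + 1 + (m + 1) = a + 2 + m by ring]
    push_cast
    ring

open Finset in
/-- For `1 ≤ j ≤ n`,
`C(2j, j-1)·C(n+j+1, n-j) = 2j·((2j-1)!/((j-1)!(j+1)!))·∑_{l=j}^n (n+1-l)·C(l+j-1, l-j)`.
This identifies the coefficient `a_j^{(n,1)}` of `e^{-jt}` in the first Weinstein
function `Λ_1^n(t) = -∑_{l=1}^n (n+1-l)·Ȧ_l(t)`. -/
theorem first_weinstein_coefficient_identity (j n : ℕ) (hj : 1 ≤ j) (hjn : j ≤ n) :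
    ((Nat.choose (2 * j) (j - 1)) : ℚ) * (Nat.choose (n + j + 1) (n - j)) =
      2 * (j : ℚ) * ((Nat.factorial (2 * j - 1) : ℚ) /
        ((Nat.factorial (j - 1) : ℚ) * (Nat.factorial (j + 1) : ℚ))) *
      ∑ l ∈ Icc j n, ((n : ℚ) + 1 - (l : ℚ)) * (Nat.choose (l + j - 1) (l - j)) := by
  obtain ⟨k, rfl⟩ := Nat.exists_eq_add_of_le' hj
  obtain ⟨m, rfl⟩ := Nat.exists_eq_add_of_le hjn
  have hs : ∑ l ∈ Icc (k + 1) (k + 1 + m), (((k + 1 + m : ℕ) : ℚ) + 1 - (l : ℚ)) *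
      (Nat.choose (l + (k + 1) - 1) (l - (k + 1)) : ℚ) =
      Nat.choose (2 * k + 1 + 2 + m) m := by
    rw [← aux_sum_two, ← Finset.Ico_add_one_right_eq_Icc, Finset.sum_Ico_eq_sum_range,
      show k + 1 + m + 1 - (k + 1) = m + 1 by omega]
    refine Finset.sum_congr rfl fun i _ => ?_
    rw [show k + 1 + i + (k + 1) - 1 = 2 * k + 1 + i by omega,
      show k + 1 + i - (k + 1) = i by omega]
    push_cast
    ring
  rw [hs, show k + 1 + m + (k + 1) + 1 = 2 * k + 1 + 2 + m by ring,
    show k + 1 + m - (k + 1) = m by omega,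
    Nat.cast_choose ℚ (show k + 1 - 1 ≤ 2 * (k + 1) by omega),
    show 2 * (k + 1) - (k + 1 - 1) = k + 1 + 1 by omega,
    show 2 * (k + 1) - 1 = 2 * k + 1 by omega,
    show 2 * (k + 1) = (2 * k + 1) + 1 by ring, Nat.factorial_succ (2 * k + 1)]
  push_cast
  ring
end

section
/- (de Branges' inequality.) Let n ≥ 1 and let τ_1, …, τ_{n+1} be a de Branges system of index n. Then for every k with 1 ≤ k ≤ n+1 and every t ≥ 0, one has τ_k(t) ≥ 0. -/
open Polynomial in
/-- Trace of the `n`-th symmetric power of the matrix `(a b; c d)`. -/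
noncomputable def symTr {A : Type*} [CommRing A] (a b c d : A) (n : ℕ) : A :=
  ∑ j ∈ Finset.range (n + 1), ((C a * X + C b) ^ j * (C c * X + C d) ^ (n - j)).coeff j

open Polynomial in
noncomputable def symAux {A : Type*} [CommRing A] (a b c d : A) (n : ℕ) : A :=
  ∑ j ∈ Finset.range (n + 1), (X * ((C a * X + C b) ^ j * (C c * X + C d) ^ (n - j))).coeff j

open Polynomial in
theorem coeff_lin_pow {A : Type*} [CommRing A] (a b : A) (n k : ℕ) :
    ((C a * X + C b) ^ n).coeff k = a ^ k * b ^ (n - k) * (n.choose k : A) := by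
  have h : (C a * X + C b) ^ n = ((X + C b) ^ n).comp (C a * X) := by simp
  rw [h, comp_C_mul_X_coeff, coeff_X_add_C_pow]; ring

open Polynomial in
theorem symTr_succ {A : Type*} [CommRing A] (a b c d : A) (n : ℕ) :
    symTr a b c d (n + 1) = d * symTr a b c d n + c * symAux a b c d n + a ^ (n + 1) := by
  unfold symTr symAux
  rw [Finset.sum_range_succ, Finset.mul_sum, Finset.mul_sum, ← Finset.sum_add_distrib]
  congr 1
  · refine Finset.sum_congr rfl fun j hj => ?_
    have hj' : n + 1 - j = (n - j) + 1 := by have := Finset.mem_range.1 hj; omega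
    rw [hj', ← coeff_C_mul, ← coeff_C_mul, ← coeff_add]
    congr 1; ring
  · simp [coeff_lin_pow]

open Polynomial in
theorem symAux_succ {A : Type*} [CommRing A] (a b c d : A) (n : ℕ) :
    symAux a b c d (n + 1) = a * symAux a b c d n + b * symTr a b c d n := by
  unfold symTr symAux
  rw [Finset.sum_range_succ', Finset.mul_sum, Finset.mul_sum, ← Finset.sum_add_distrib]
  simp only [mul_coeff_zero, coeff_X_zero, zero_mul, add_zero]
  refine Finset.sum_congr rfl fun j hj => ?_
  rw [coeff_X_mul, ← coeff_C_mul, ← coeff_C_mul, ← coeff_add, Nat.add_sub_add_right]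
  congr 1; ring

theorem symTr_rec {A : Type*} [CommRing A] (a b c d : A) (n : ℕ) :
    symTr a b c d (n + 2) = (a + d) * symTr a b c d (n + 1) - (a * d - b * c) * symTr a b c d n := by
  rw [symTr_succ a b c d (n + 1), symAux_succ, symTr_succ]; ring

theorem symTr_zero {A : Type*} [CommRing A] (a b c d : A) : symTr a b c d 0 = 1 := by
  simp [symTr]

theorem symTr_one {A : Type*} [CommRing A] (a b c d : A) : symTr a b c d 1 = a + d := by
  simp [symTr, Finset.sum_range_succ]; ring

open Polynomial in
theorem hom_step {R B : Type*} [CommRing R] [CommRing B] (φ : R →+* B) (U V : B) (α β : R)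
    (p : R[X]) (N : ℕ) (hp : p.natDegree ≤ N) :
    ∑ b ∈ Finset.range (N + 2), φ (((C α * X + C β) * p).coeff b) * U ^ b * V ^ (N + 1 - b) =
    (φ α * U + φ β * V) * ∑ b ∈ Finset.range (N + 1), φ (p.coeff b) * U ^ b * V ^ (N - b) := by
  have h1 : ∑ b ∈ Finset.range (N + 2), φ ((C α * (X * p)).coeff b) * U ^ b * V ^ (N + 1 - b) =
      φ α * U * ∑ b ∈ Finset.range (N + 1), φ (p.coeff b) * U ^ b * V ^ (N - b) := by
    rw [Finset.sum_range_succ', Finset.mul_sum]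
    simp only [coeff_C_mul, coeff_X_mul, Nat.add_sub_add_right, mul_coeff_zero, coeff_X_zero,
      zero_mul, mul_zero, map_zero, add_zero, map_mul]
    exact Finset.sum_congr rfl fun j hj => by ring
  have h2 : ∑ b ∈ Finset.range (N + 2), φ ((C β * p).coeff b) * U ^ b * V ^ (N + 1 - b) =
      φ β * V * ∑ b ∈ Finset.range (N + 1), φ (p.coeff b) * U ^ b * V ^ (N - b) := by
    rw [Finset.sum_range_succ, Finset.mul_sum, coeff_C_mul,
      coeff_eq_zero_of_natDegree_lt (show p.natDegree < N + 1 by omega)]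
    simp only [mul_zero, map_zero, zero_mul, add_zero, coeff_C_mul, map_mul]
    refine Finset.sum_congr rfl fun j hj => ?_
    have hj' : N + 1 - j = (N - j) + 1 := by have := Finset.mem_range.1 hj; omega
    rw [hj']; ring
  rw [add_mul (φ α * U), ← h1, ← h2, ← Finset.sum_add_distrib]
  refine Finset.sum_congr rfl fun j hj => ?_
  rw [add_mul, coeff_add, map_add, mul_assoc]; ring

open Polynomial in
theorem natDegree_lin_le {R : Type*} [CommRing R] (α β γ δ : R) (a m : ℕ) :
    ((C α * X + C β) ^ a * (C γ * X + C δ) ^ m).natDegree ≤ a + m := by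
  refine natDegree_mul_le.trans (add_le_add ?_ ?_)
  · simpa using natDegree_pow_le_of_le a (natDegree_linear_le (a := α) (b := β))
  · simpa using natDegree_pow_le_of_le m (natDegree_linear_le (a := γ) (b := δ))

open Polynomial in
theorem hom_lin {R B : Type*} [CommRing R] [CommRing B] (φ : R →+* B) (U V : B) (α β γ δ : R)
    (a m : ℕ) :
    ∑ b ∈ Finset.range (a + m + 1),
      φ (((C α * X + C β) ^ a * (C γ * X + C δ) ^ m).coeff b) * U ^ b * V ^ (a + m - b) =
    (φ α * U + φ β * V) ^ a * (φ γ * U + φ δ * V) ^ m := by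
  induction a with
  | zero =>
    induction m with
    | zero => simp
    | succ m ih =>
      have := hom_step φ U V γ δ _ _ (natDegree_lin_le α β γ δ 0 m)
      rw [ih] at this
      simp only [zero_add, pow_zero, one_mul] at this ⊢
      rw [pow_succ', pow_succ', this]
  | succ a ih =>
    have := hom_step φ U V α β _ _ (natDegree_lin_le α β γ δ a m)
    rw [ih] at this
    rw [pow_succ' (φ α * U + φ β * V), mul_assoc, ← this]
    rw [show a + 1 + m = a + m + 1 by ring, pow_succ', mul_assoc]

open Polynomial Polynomial.Bivariate in
theorem swap_coeff' (p : ℝ[X][Y]) (i j : ℕ) :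
    ((Bivariate.swap p).coeff i).coeff j = (p.coeff j).coeff i := by
  induction p using Polynomial.induction_on' with
  | add p q hp hq => simp only [map_add, coeff_add, hp, hq]
  | monomial n f =>
    induction f using Polynomial.induction_on' with
    | add p q hp hq => simp only [map_add, coeff_add, hp, hq]
    | monomial m r =>
      rw [Bivariate.swap_monomial_monomial]
      simp only [coeff_monomial]
      split_ifs <;> simp_all [coeff_monomial]

open Polynomial Polynomial.Bivariate in
theorem rot_symm (c s : ℝ) (n a b : ℕ) :
    (n.choose a : ℝ) * ((C c * X + C s) ^ a * (C (-s) * X + C c) ^ (n - a)).coeff b =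
    (n.choose b : ℝ) * ((C c * X + C (-s)) ^ b * (C s * X + C c) ^ (n - b)).coeff a := by
  have key : Bivariate.swap ((C (C c * X + C s) * X + C (C (-s) * X + C c)) ^ n : ℝ[X][Y]) =
      (C (C c * X + C (-s)) * X + C (C s * X + C c)) ^ n := by
    rw [map_pow]; congr 1
    simp only [map_add, map_mul, Bivariate.swap_X, Bivariate.swap_Y, Bivariate.swap_C_C]
    ring
  have h := congrArg (fun p : ℝ[X][Y] => (p.coeff b).coeff a) key
  simp only [swap_coeff', coeff_lin_pow] at h
  rw [coeff_mul_natCast, coeff_mul_natCast] at h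
  rw [mul_comm, h, mul_comm]

open Polynomial in
theorem rot_nonneg (c s : ℝ) (n a b : ℕ) (ha : a ≤ n) (hb : b ≤ n) :
    0 ≤ ((C c * X + C s) ^ a * (C (-s) * X + C c) ^ (n - a)).coeff b *
      ((C c * X + C (-s)) ^ b * (C s * X + C c) ^ (n - b)).coeff a := by
  have h := rot_symm c s n a b
  have h1 : (0 : ℝ) < n.choose a := by exact_mod_cast Nat.choose_pos ha
  have h2 : (0 : ℝ) < n.choose b := by exact_mod_cast Nat.choose_pos hb
  generalize ((C c * X + C s) ^ a * (C (-s) * X + C c) ^ (n - a)).coeff b = u at *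
  generalize ((C c * X + C (-s)) ^ b * (C s * X + C c) ^ (n - b)).coeff a = v at *
  have : (n.choose a : ℝ) * (u * v) = n.choose b * v ^ 2 := by rw [← mul_assoc, h]; ring
  have h3 : 0 ≤ (n.choose a : ℝ) * (u * v) := by rw [this]; positivity
  exact nonneg_of_mul_nonneg_right h3 h1

open LaurentPolynomial in
theorem rot_entry (c s : ℝ) (n a : ℕ) (ha : a ≤ n) :
    ((Polynomial.C (C (c ^ 2) + C (s ^ 2) * T (-1)) * Polynomial.X
        + Polynomial.C (C (c * s) * (T (-1) - 1))) ^ a *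
      (Polynomial.C (C (c * s) * (1 - T 1)) * Polynomial.X
        + Polynomial.C (C (s ^ 2) * T 1 + C (c ^ 2))) ^ (n - a) : Polynomial ℝ[T;T⁻¹]).coeff a =
    ∑ b ∈ Finset.range (n + 1), C
      (((Polynomial.C c * Polynomial.X + Polynomial.C s) ^ a *
        (Polynomial.C (-s) * Polynomial.X + Polynomial.C c) ^ (n - a)).coeff b *
      ((Polynomial.C c * Polynomial.X + Polynomial.C (-s)) ^ b *
        (Polynomial.C s * Polynomial.X + Polynomial.C c) ^ (n - b)).coeff a) *
      T ((b : ℤ) - a) := by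
  have h := hom_lin ((Polynomial.C : ℝ[T;T⁻¹] →+* _).comp (C : ℝ →+* ℝ[T;T⁻¹]))
    (Polynomial.C (T 1) * (Polynomial.C (C c) * Polynomial.X + Polynomial.C (C (-s))))
    (Polynomial.C (C s) * Polynomial.X + Polynomial.C (C c)) c s (-s) c a (n - a)
  rw [show a + (n - a) = n by omega] at h
  have hT : (T (-1) * T 1 : ℝ[T;T⁻¹]) = 1 := by rw [← T_add]; simp
  have e1 : (Polynomial.C (C (c ^ 2) + C (s ^ 2) * T (-1)) * Polynomial.X
        + Polynomial.C (C (c * s) * (T (-1) - 1)) : Polynomial ℝ[T;T⁻¹]) =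
      Polynomial.C (T (-1)) * (Polynomial.C (C c) * (Polynomial.C (T 1) * (Polynomial.C (C c) * Polynomial.X + Polynomial.C (C (-s)))) + Polynomial.C (C s) * (Polynomial.C (C s) * Polynomial.X + Polynomial.C (C c))) := by
    have hT' : (Polynomial.C (T (-1)) * Polynomial.C (T 1) : Polynomial ℝ[T;T⁻¹]) = 1 := by
      rw [← Polynomial.C_mul, hT, Polynomial.C_1]
    simp only [map_add, map_mul, map_pow, map_neg, map_sub, map_one]
    linear_combination (-(Polynomial.C (C c)) ^ 2 * Polynomial.X + Polynomial.C (C c) * Polynomial.C (C s)) * hT'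
  have e2 : (Polynomial.C (C (c * s) * (1 - T 1)) * Polynomial.X
        + Polynomial.C (C (s ^ 2) * T 1 + C (c ^ 2)) : Polynomial ℝ[T;T⁻¹]) =
      (Polynomial.C (C (-s)) * (Polynomial.C (T 1) * (Polynomial.C (C c) * Polynomial.X + Polynomial.C (C (-s)))) + Polynomial.C (C c) * (Polynomial.C (C s) * Polynomial.X + Polynomial.C (C c))) := by
    simp only [map_add, map_mul, map_pow, map_neg, map_sub, map_one]
    ring
  simp only [RingHom.comp_apply] at h
  rw [e1, e2, mul_pow, mul_assoc, ← h, ← Polynomial.C_pow, Polynomial.coeff_C_mul,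
    Polynomial.finsetSum_coeff, Finset.mul_sum]
  refine Finset.sum_congr rfl fun b hb => ?_
  rw [mul_pow, mul_assoc, Polynomial.coeff_C_mul, mul_assoc, ← Polynomial.C_pow,
    Polynomial.coeff_C_mul]
  have hm : ((Polynomial.C (C c) * Polynomial.X + Polynomial.C (C (-s))) ^ b *
      (Polynomial.C (C s) * Polynomial.X + Polynomial.C (C c)) ^ (n - b) : Polynomial ℝ[T;T⁻¹]) =
      ((Polynomial.C c * Polynomial.X + Polynomial.C (-s)) ^ b *
        (Polynomial.C s * Polynomial.X + Polynomial.C c) ^ (n - b)).map (C : ℝ →+* ℝ[T;T⁻¹]) := by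
    simp
  rw [hm, Polynomial.coeff_map, T_sub, T_pow, T_pow, map_mul]
  simp only [mul_neg, mul_one]
  ring

/-- Cosine coefficients of `U_n(1 - x + x cos φ)`. -/
noncomputable def lam (x : ℝ) : ℕ → ℤ → ℝ
  | 0, k => if k = 0 then 1 else 0
  | 1, k => 2 * (1 - x) * (if k = 0 then 1 else 0) + x * ((if k = 1 then 1 else 0) + (if k = -1 then 1 else 0))
  | n + 2, k => 2 * (1 - x) * lam x (n + 1) k + x * (lam x (n + 1) (k - 1) + lam x (n + 1) (k + 1))
      - lam x n k

open LaurentPolynomial in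
theorem lam_eq (c s : ℝ) (h : c ^ 2 + s ^ 2 = 1) (n : ℕ) : ∀ k : ℤ,
    lam (s ^ 2) n k = (symTr (C (c ^ 2) + C (s ^ 2) * T (-1)) (C (c * s) * (T (-1) - 1))
      (C (c * s) * (1 - T 1)) (C (s ^ 2) * T 1 + C (c ^ 2)) n : ℝ[T;T⁻¹]).coeff k := by
  have hT : (T (-1) * T 1 : ℝ[T;T⁻¹]) = 1 := by rw [← T_add]; simp
  have hdet : ((C (c ^ 2) + C (s ^ 2) * T (-1)) * (C (s ^ 2) * T 1 + C (c ^ 2)) -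
      (C (c * s) * (T (-1) - 1)) * (C (c * s) * (1 - T 1)) : ℝ[T;T⁻¹]) = 1 := by
    have h' : (C c ^ 2 + C s ^ 2 : ℝ[T;T⁻¹]) = 1 := by
      rw [← map_pow, ← map_pow, ← map_add, h, map_one]
    simp only [map_mul, map_pow]
    linear_combination (C c ^ 2 + C s ^ 2 + 1 : ℝ[T;T⁻¹]) * h' + (C s ^ 4 + C c ^ 2 * C s ^ 2) * hT
  have htr : ((C (c ^ 2) + C (s ^ 2) * T (-1)) + (C (s ^ 2) * T 1 + C (c ^ 2)) : ℝ[T;T⁻¹]) =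
      AddMonoidAlgebra.single 0 (2 * (1 - s ^ 2)) + AddMonoidAlgebra.single 1 (s ^ 2)
        + AddMonoidAlgebra.single (-1) (s ^ 2) := by
    rw [show 2 * (1 - s ^ 2) = c ^ 2 + c ^ 2 by linarith, single_eq_C_mul_T, single_eq_C_mul_T,
      single_eq_C_mul_T, T_zero, map_add]; ring
  induction n using Nat.twoStepInduction with
  | zero =>
    intro k; rw [symTr_zero, ← T_zero, T_apply]; simp [lam, eq_comm]
  | one =>
    intro k; rw [symTr_one, htr]
    simp only [lam, AddMonoidAlgebra.coeff_add, Finsupp.add_apply, AddMonoidAlgebra.coeff_single, Finsupp.single_apply, eq_comm]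
    split_ifs <;> first | (exfalso; omega) | ring1
  | more n h0 h1 =>
    intro k
    rw [symTr_rec, hdet, htr, lam, h0, h1, h1, h1, one_mul, add_mul, add_mul]
    simp only [AddMonoidAlgebra.coeff_add, AddMonoidAlgebra.coeff_sub, Finsupp.add_apply,
      Finsupp.sub_apply, AddMonoidAlgebra.coeff_single_mul_apply]
    rw [show -0 + k = k by ring, show -1 + k = k - 1 by ring, show - -1 + k = k + 1 by ring]
    ring

open LaurentPolynomial in
theorem lam_nonneg (x : ℝ) (h0 : 0 ≤ x) (h1 : x ≤ 1) (n : ℕ) (k : ℤ) : 0 ≤ lam x n k := by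
  have hs : √x ^ 2 = x := Real.sq_sqrt h0
  have hc : √(1 - x) ^ 2 = 1 - x := Real.sq_sqrt (by linarith)
  have h := lam_eq √(1 - x) √x (by rw [hs, hc]; ring) n k
  rw [show lam x n k = lam (√x ^ 2) n k by rw [hs], h, symTr,
    AddMonoidAlgebra.coeff_sum, Finsupp.finsetSum_apply]
  refine Finset.sum_nonneg fun a ha => ?_
  have ha' : a ≤ n := by have := Finset.mem_range.1 ha; omega
  rw [rot_entry _ _ n a ha', AddMonoidAlgebra.coeff_sum, Finsupp.finsetSum_apply]
  refine Finset.sum_nonneg fun b hb => ?_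
  have hb' : b ≤ n := by have := Finset.mem_range.1 hb; omega
  rw [← single_eq_C_mul_T, AddMonoidAlgebra.coeff_single, Finsupp.single_apply]
  split_ifs
  · exact rot_nonneg _ _ n a b ha' hb'
  · exact le_rfl

theorem lam_support (x : ℝ) (n : ℕ) : ∀ k : ℤ, (n : ℤ) < k → lam x n k = 0 := by
  induction n using Nat.twoStepInduction with
  | zero => intro k hk; simp [lam]; intro h; simp_all
  | one => intro k hk; simp at hk; simp [lam, show k ≠ 0 by omega, show k ≠ 1 by omega, show k ≠ -1 by omega]
  | more n h0 h1 =>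
    intro k hk
    push_cast at hk h1
    rw [lam, h1 k (by omega), h1 (k - 1) (by omega), h1 (k + 1) (by omega), h0 k (by omega)]; ring

theorem lam_init (n : ℕ) : ∀ k : ℤ, lam 1 n k + lam 1 n (k + 1) =
    if -(n : ℤ) - 1 ≤ k ∧ k ≤ n then 1 else 0 := by
  induction n using Nat.twoStepInduction with
  | zero => intro k; simp only [lam]; split_ifs <;> first | (exfalso; push_cast at *; omega) | norm_num
  | one => intro k; simp only [lam]; split_ifs <;> first | (exfalso; push_cast at *; omega) | norm_num
  | more n h0 h1 =>
    intro k
    have a1 := h1 (k - 1)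
    have a2 := h1 (k + 1)
    have a3 := h0 k
    have : lam 1 (n + 2) k + lam 1 (n + 2) (k + 1) =
        (lam 1 (n + 1) (k - 1) + lam 1 (n + 1) (k - 1 + 1)) +
        (lam 1 (n + 1) (k + 1) + lam 1 (n + 1) (k + 1 + 1)) - (lam 1 n k + lam 1 n (k + 1)) := by
      rw [lam, lam, show k + 1 - 1 = k by ring, show k - 1 + 1 = k by ring]; ring
    rw [this, a1, a2, a3]
    push_cast
    split_ifs <;> first | (exfalso; omega) | norm_num

/-- Derivative of `lam` in `x`. -/
noncomputable def lamD (x : ℝ) : ℕ → ℤ → ℝ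
  | 0, _ => 0
  | 1, k => -2 * (if k = 0 then 1 else 0) + ((if k = 1 then 1 else 0) + (if k = -1 then 1 else 0))
  | n + 2, k => -2 * lam x (n + 1) k + 2 * (1 - x) * lamD x (n + 1) k
      + ((lam x (n + 1) (k - 1) + lam x (n + 1) (k + 1))
        + x * (lamD x (n + 1) (k - 1) + lamD x (n + 1) (k + 1))) - lamD x n k

theorem lam_hasDerivAt (x : ℝ) (n : ℕ) : ∀ k : ℤ,
    HasDerivAt (fun y => lam y n k) (lamD x n k) x := by
  have e : HasDerivAt (fun y : ℝ => 2 * (1 - y)) (-2) x := by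
    simpa using ((hasDerivAt_id x).const_sub 1).const_mul 2
  induction n using Nat.twoStepInduction with
  | zero => intro k; simp only [lam, lamD]; exact hasDerivAt_const _ _
  | one =>
    intro k; simp only [lam, lamD]
    refine ((e.mul_const _).add ((hasDerivAt_id x).mul_const _)).congr_deriv ?_
    rw [one_mul]
  | more n h0 h1 =>
    intro k
    simp only [lam, lamD]
    have := ((e.mul (h1 k)).add ((hasDerivAt_id x).mul ((h1 (k - 1)).add (h1 (k + 1))))).sub (h0 k)
    refine this.congr_deriv ?_
    simp

theorem lam_ode (x : ℝ) (n : ℕ) : ∀ k : ℤ,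
    x * (lamD x n k + lamD x n (k + 1)) - k * lam x n k + (k + 1) * lam x n (k + 1) = 0 := by
  induction n using Nat.twoStepInduction with
  | zero =>
    intro k; simp only [lam, lamD]
    rcases eq_or_ne k 0 with rfl | h
    · simp
    · rcases eq_or_ne k (-1) with rfl | h'
      · simp
      · simp [h, show k + 1 ≠ 0 by omega]
  | one =>
    intro k; simp only [lam, lamD]
    by_cases h : k = 0 ∨ k = 1 ∨ k = -1 ∨ k = -2
    · rcases h with rfl | rfl | rfl | rfl <;> norm_num <;> ring
    · push Not at h
      simp [h, show k + 1 ≠ 0 by omega, show k + 1 ≠ 1 by omega, show k + 1 ≠ -1 by omega]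
  | more n h0 h1 =>
    intro k
    have a0 := h1 k
    have a1 := h1 (k - 1)
    have a2 := h1 (k + 1)
    have a3 := h0 k
    rw [show k - 1 + 1 = k by ring] at a1
    push_cast at a1 a2
    simp only [lam, lamD]
    rw [show k + 1 - 1 = k by ring]
    linear_combination 2 * (1 - x) * a0 + x * (a1 + a2) - a3

theorem deBranges_nonneg (n : ℕ) (hn : 1 ≤ n) (τ : ℕ → ℝ → ℝ)
    (hτ : IsDeBrangesSystem n τ) :
    ∀ k : ℕ, 1 ≤ k → k ≤ n + 1 → ∀ t : ℝ, 0 ≤ t → 0 ≤ τ k t := by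
  have hE : ∀ t : ℝ, HasDerivAt (fun t => Real.exp (-t)) (-Real.exp (-t)) t := fun t => by
    simpa using (hasDerivAt_neg t).exp
  have hL : ∀ (k : ℤ) (t : ℝ), HasDerivAt (fun t => lam (Real.exp (-t)) n k)
      (lamD (Real.exp (-t)) n k * -Real.exp (-t)) t := fun k t =>
    HasDerivAt.comp (h₂ := fun y => lam y n k) t (lam_hasDerivAt (Real.exp (-t)) n k) (hE t)
  suffices H : ∀ m : ℕ, m ≤ n → ∀ k : ℕ, k + m = n + 1 →
      (∀ t, HasDerivAt (τ k) (-k * lam (Real.exp (-t)) n k) t) ∧ (∀ t, 0 ≤ t → 0 ≤ τ k t) by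
    intro k hk hk'
    exact (H (n + 1 - k) (by omega) k (by omega)).2
  intro m
  induction m with
  | zero =>
    intro _ k hk
    obtain rfl : k = n + 1 := by omega
    have : τ (n + 1) = fun _ => 0 := funext hτ.top_eq_zero
    rw [this]
    refine ⟨fun t => ?_, fun t _ => le_rfl⟩
    rw [lam_support _ _ _ (by push_cast; omega), mul_zero]
    exact hasDerivAt_const _ _
  | succ m ih =>
    intro hm k hk
    obtain ⟨hd, hpos⟩ := ih (by omega) (k + 1) (by omega)
    have hk1 : 1 ≤ k := by omega
    have hkR : (k : ℝ) ≠ 0 := by positivity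
    have hk1R : (k : ℝ) + 1 ≠ 0 := by positivity
    push_cast at hd
    set σ : ℝ → ℝ := fun t => τ (k + 1) t + (lam (Real.exp (-t)) n k + lam (Real.exp (-t)) n (k + 1))
      with hσ
    have hσd : ∀ t, HasDerivAt σ (-k * lam (Real.exp (-t)) n k) t := by
      intro t
      refine ((hd t).add ((hL k t).add (hL (k + 1) t))).congr_deriv ?_
      have := lam_ode (Real.exp (-t)) n k
      push_cast at this
      linear_combination -this
    have hσ0 : σ 0 = τ k 0 := by
      have h2 := lam_init n k
      rw [if_pos (by omega)] at h2
      simp only [hσ, neg_zero, Real.exp_zero]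
      rw [h2, hτ.initial _ (by omega) (by omega), hτ.initial _ (by omega) (by omega)]
      push_cast; ring
    have hτd : ∀ t, HasDerivAt (τ k) (k * (σ t - lam (Real.exp (-t)) n k - τ k t)) t := by
      intro t
      have h1 := (hτ.differentiable k hk1 (by omega) t).hasDerivAt
      have h2 := hτ.system k hk1 (by omega) t
      rw [(hd t).deriv] at h2
      refine h1.congr_deriv ?_
      simp only [hσ]
      field_simp at h2
      have h3 : deriv (τ k) t = k * (τ (k + 1) t - τ k t + lam (Real.exp (-t)) n (k + 1)) := by
        linear_combination -h2
      rw [h3]; ring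
    have heq : ∀ t, τ k t = σ t := by
      have hz : ∀ t, HasDerivAt (fun t => Real.exp (k * t) * (τ k t - σ t)) 0 t := by
        intro t
        have he : HasDerivAt (fun t : ℝ => Real.exp (k * t)) (Real.exp (k * t) * k) t := by
          simpa using ((hasDerivAt_id t).const_mul (k : ℝ)).exp
        refine (he.mul ((hτd t).sub (hσd t))).congr_deriv ?_
        simp only [Pi.sub_apply]
        ring
      intro t
      have hc := is_const_of_deriv_eq_zero (fun t => (hz t).differentiableAt)
        (fun t => (hz t).deriv) t 0
      simp only [hσ0, sub_self, mul_zero] at hc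
      have := (mul_eq_zero.1 hc).resolve_left (Real.exp_pos _).ne'
      linarith
    refine ⟨fun t => ?_, fun t ht => ?_⟩
    · rw [show τ k = σ from funext heq]; exact hσd t
    · rw [heq t]
      have hx0 := (Real.exp_pos (-t)).le
      have hx1 : Real.exp (-t) ≤ 1 := Real.exp_le_one_iff.2 (by linarith)
      have := hpos t ht
      have := lam_nonneg _ hx0 hx1 n k
      have := lam_nonneg _ hx0 hx1 n (k + 1)
      simp only [hσ]; linarith
end

section
/- Let n ≥ 1 and let τ_1, …, τ_{n+1} be a de Branges system of index n. Then for every k with 1 ≤ k ≤ n+1, the limit lim_{t→∞} τ_k(t) = 0 holds (i.e., τ_k(t) tends to 0 as t tends to +∞). -/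
lemma dB_upper (f : ℝ → ℝ) (hf : Differentiable ℝ f) (c : ℝ) (hc : 0 < c)
    (h : Filter.Tendsto (fun t => deriv f t + c * f t) Filter.atTop (nhds 0))
    (ε : ℝ) (hε : 0 < ε) : ∀ᶠ t in Filter.atTop, f t < ε := by
  have h1 : ∀ᶠ t in Filter.atTop, deriv f t + c * f t < c * (ε / 2) :=
    h.eventually (gt_mem_nhds (by positivity))
  obtain ⟨T, hT⟩ := Filter.eventually_atTop.1 h1
  have hd : ∀ t, HasDerivAt (fun t => (f t - ε / 2) * Real.exp (c * t))
      (deriv f t * Real.exp (c * t) + (f t - ε / 2) * (Real.exp (c * t) * c)) t := by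
    intro t
    have h2 : HasDerivAt (fun t : ℝ => c * t) c t := by
      simpa using (hasDerivAt_id t).const_mul c
    exact ((hf t).hasDerivAt.sub_const (ε / 2)).mul h2.exp
  have hanti : AntitoneOn (fun t => (f t - ε / 2) * Real.exp (c * t)) (Set.Ici T) := by
    apply antitoneOn_of_deriv_nonpos (convex_Ici T)
    · exact fun t _ => (hd t).continuousAt.continuousWithinAt
    · exact fun t _ => (hd t).differentiableAt.differentiableWithinAt
    · intro t ht
      rw [interior_Ici] at ht
      rw [(hd t).deriv]
      have := hT t (le_of_lt ht)
      have e := Real.exp_pos (c * t)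
      nlinarith
  set A := (f T - ε / 2) * Real.exp (c * T) with hA
  have hexp : Filter.Tendsto (fun t => Real.exp (c * t) * (ε / 2)) Filter.atTop Filter.atTop :=
    (Real.tendsto_exp_atTop.comp (Filter.tendsto_id.const_mul_atTop hc)).atTop_mul_const
      (by positivity)
  filter_upwards [hexp.eventually_gt_atTop A, Filter.eventually_ge_atTop T] with t h3 h4
  have h5 : (f t - ε / 2) * Real.exp (c * t) ≤ A := hanti Set.self_mem_Ici h4 h4
  have e := Real.exp_pos (c * t)
  by_contra! h6
  nlinarith

lemma dB_tendsto (f : ℝ → ℝ) (hf : Differentiable ℝ f) (c : ℝ) (hc : 0 < c)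
    (h : Filter.Tendsto (fun t => deriv f t + c * f t) Filter.atTop (nhds 0)) :
    Filter.Tendsto f Filter.atTop (nhds 0) := by
  rw [Metric.tendsto_nhds]
  intro ε hε
  have hneg : Filter.Tendsto (fun t => deriv (-f) t + c * (-f) t) Filter.atTop (nhds 0) := by
    have := h.neg
    rw [neg_zero] at this
    refine this.congr fun t => ?_
    rw [deriv.neg]
    simp only [Pi.neg_apply]
    ring
  filter_upwards [dB_upper f hf c hc h ε hε, dB_upper (-f) hf.neg c hc hneg ε hε] with t h1 h2
  rw [Real.dist_eq, sub_zero, abs_lt]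
  simp only [Pi.neg_apply] at h2
  constructor <;> linarith

/-- The de Branges functions tend to `0` as `t → +∞`. -/
theorem deBranges_tendsto_zero (n : ℕ) (hn : 1 ≤ n) (τ : ℕ → ℝ → ℝ)
    (hτ : IsDeBrangesSystem n τ) :
    ∀ k : ℕ, 1 ≤ k → k ≤ n + 1 →
      Filter.Tendsto (τ k) Filter.atTop (nhds 0) := by
  suffices H : ∀ k : ℕ, k ≤ n + 1 → 1 ≤ k →
      Filter.Tendsto (τ k) Filter.atTop (nhds 0) ∧
      Filter.Tendsto (deriv (τ k)) Filter.atTop (nhds 0) from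
    fun k h1 h2 => (H k h2 h1).1
  intro k hk
  induction hk using Nat.decreasingInduction with
  | self =>
    intro _
    have h0 : τ (n + 1) = fun _ => 0 := funext hτ.top_eq_zero
    rw [h0]
    simp
  | of_succ k hk ih =>
    intro h1
    obtain ⟨ha, hb⟩ := ih (by omega)
    have hkpos : (0 : ℝ) < k := by exact_mod_cast h1
    have hg : Filter.Tendsto (fun t => deriv (τ k) t + k * τ k t) Filter.atTop (nhds 0) := by
      have := (ha.const_mul (k : ℝ)).sub (hb.const_mul ((k : ℝ) / (k + 1)))
      simp only [mul_zero, sub_zero] at this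
      refine this.congr fun t => ?_
      have hs := hτ.system k h1 (by omega) t
      field_simp at hs ⊢
      linarith
    have hf := dB_tendsto (τ k) (hτ.differentiable k h1 (by omega)) k hkpos hg
    refine ⟨hf, ?_⟩
    have := hg.sub (hf.const_mul (k : ℝ))
    simp only [mul_zero, sub_zero] at this
    exact this.congr fun t => by ring
end
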